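/- Let f ∈ ℂ[x,y,z,w] be a reduced homogeneous polynomial of degree d defining a surface D: f = 0 in P³ which is tame with respect to a pair of syzygies ρ1, ρ2 of degrees e1 = deg ρ1 ≤ e2 = deg ρ2. Set e3 = d − 1 − e1 − e2 and assume e3 ≥ e2. Then for every integer k ≥ e3 + d − 1 one has m(f)_k ≤ binom(k+3,3) − 4·binom(k−d+4,3) + binom(k−d−e1+4,3) + binom(k−d−e2+4,3) + binom(k−d−e3+4,3) (with binom(m,3) = 0 when m < 3). Moreover the following are equivalent: (i) equality holds for every k ≥ e3 + d − 1; (ii) equality holds for k = e3 + d − 1; (iii) D is a free surface with exponents e1, e2, e3. -/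

import Mathlib

open MvPolynomial Matrix

noncomputable section

/-- The polynomial ring `S = ℂ[x,y,z,w]`. -/
abbrev S4 : Type := MvPolynomial (Fin 4) ℂ

/-- The `S`-linear map sending `ρ = (α,β,γ,δ)` to `α fₓ + β f_y + γ f_z + δ f_w`. -/
def jacPair (f : S4) : (Fin 4 → S4) →ₗ[S4] S4 where
  toFun ρ := ∑ i, ρ i * pderiv i f
  map_add' a b := by simp [add_mul, Finset.sum_add_distrib]
  map_smul' c a := by simp [Finset.mul_sum, mul_assoc]

/-- `AR(f)`: the `S`-module of all Jacobian syzygies of `f`. -/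
def AR4 (f : S4) : Submodule S4 (Fin 4 → S4) := LinearMap.ker (jacPair f)

/-- A vector of polynomials is homogeneous of degree `q` if each component is. -/
def VecHomog (ρ : Fin 4 → S4) (q : ℕ) : Prop := ∀ i, (ρ i).IsHomogeneous q

/-- `AR(f)_k`, the degree-`k` homogeneous part of `AR(f)`, as a `ℂ`-subspace. -/
def ARgr (f : S4) (k : ℕ) : Submodule ℂ (Fin 4 → S4) :=
  (AR4 f).restrictScalars ℂ ⊓ Submodule.pi Set.univ (fun _ => homogeneousSubmodule (Fin 4) ℂ k)

/-- `ar(f)_k = dim_ℂ AR(f)_k`. -/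
def arDim (f : S4) (k : ℕ) : ℕ := Module.finrank ℂ (ARgr f k)

/-- `ar(f)_q` for an integer index, with the convention that it vanishes for `q < 0`. -/
def arZ (f : S4) (q : ℤ) : ℕ := if 0 ≤ q then arDim f q.toNat else 0

/-- The Jacobian ideal of `f`. -/
def JacIdeal (f : S4) : Ideal S4 := Ideal.span (Set.range fun i : Fin 4 => pderiv i f)

/-- `m(f)_k = dim_ℂ M(f)_k`, the dimension of the degree-`k` part of the Milnor algebra. -/
def milnor4 (f : S4) (k : ℕ) : ℕ :=
  Module.finrank ℂ ((homogeneousSubmodule (Fin 4) ℂ k).map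
    (Submodule.mkQ ((JacIdeal f).restrictScalars ℂ)))

/-- `binom(m,3)` with the convention that it is `0` for `m < 3`. -/
def binom3 (m : ℤ) : ℕ := m.toNat.choose 3

/-- All four `3×3` minors of the `3×4` matrix with rows `ρ1, ρ2, ρ` vanish. -/
def MinorsVanish3 (ρ1 ρ2 ρ : Fin 4 → S4) : Prop :=
  ∀ j : Fin 4,
    (Matrix.of fun i k => ![ρ1, ρ2, ρ] i (j.succAbove k) : Matrix (Fin 3) (Fin 3) S4).det = 0

/-- `D : f = 0` is tame with respect to `ρ1, ρ2`: every homogeneous syzygy `ρ` for which all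
`3×3` minors of the matrix with rows `ρ1, ρ2, ρ` vanish lies in `S·ρ1 + S·ρ2`. -/
def TamePair (f : S4) (ρ1 ρ2 : Fin 4 → S4) : Prop :=
  ∀ ρ ∈ AR4 f, ∀ q : ℕ, VecHomog ρ q → MinorsVanish3 ρ1 ρ2 ρ →
    ∃ a b : S4, ρ = a • ρ1 + b • ρ2

/-- `ρ1` is a nonzero homogeneous syzygy of minimal degree `e1`, and `ρ2` is a homogeneous
syzygy of minimal degree `e2 ≥ e1` among the homogeneous syzygies not in `S·ρ1`. -/
def MinimalPair (f : S4) (ρ1 ρ2 : Fin 4 → S4) (e1 e2 : ℕ) : Prop :=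
  ρ1 ∈ AR4 f ∧ ρ1 ≠ 0 ∧ VecHomog ρ1 e1 ∧
  (∀ ρ ∈ AR4 f, ∀ q : ℕ, ρ ≠ 0 → VecHomog ρ q → e1 ≤ q) ∧
  ρ2 ∈ AR4 f ∧ VecHomog ρ2 e2 ∧ e1 ≤ e2 ∧ (∀ a : S4, ρ2 ≠ a • ρ1) ∧
  (∀ ρ ∈ AR4 f, ∀ q : ℕ, VecHomog ρ q → (∀ a : S4, ρ ≠ a • ρ1) → e2 ≤ q)

/-- `D : f = 0` is a free surface with exponents `d1 ≤ d2 ≤ d3`: `AR(f)` is a free graded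
`S`-module with a homogeneous basis of degrees `d1, d2, d3`. -/
def IsFreeWith (f : S4) (d1 d2 d3 : ℕ) : Prop :=
  d1 ≤ d2 ∧ d2 ≤ d3 ∧
  ∃ ρ1 ρ2 ρ3 : Fin 4 → S4,
    ρ1 ∈ AR4 f ∧ ρ2 ∈ AR4 f ∧ ρ3 ∈ AR4 f ∧
    VecHomog ρ1 d1 ∧ VecHomog ρ2 d2 ∧ VecHomog ρ3 d3 ∧
    (∀ ρ ∈ AR4 f, ∃ a b c : S4, ρ = a • ρ1 + b • ρ2 + c • ρ3) ∧
    (∀ a b c : S4, a • ρ1 + b • ρ2 + c • ρ3 = 0 → a = 0 ∧ b = 0 ∧ c = 0)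

/-- `D : f = 0` is a nearly free surface with exponents `d1 ≤ d2 ≤ d3` (`d4 = d3`):
`AR(f)` is generated by four homogeneous syzygies of degrees `d1, d2, d3, d3`,
with `d3 = d - (d1 + d2)`, whose module of relations is generated by a single relation
`a₁ρ₁ + a₂ρ₂ + a₃ρ₃ + a₄ρ₄ = 0` with `a₁, a₂, a₃, a₄` homogeneous of degrees
`d3-d1+1, d3-d2+1, 1, 1`. -/
def IsNearlyFreeWith (f : S4) (d d1 d2 d3 : ℕ) : Prop :=
  d1 ≤ d2 ∧ d2 ≤ d3 ∧ d1 + d2 + d3 = d ∧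
  ∃ (ρ : Fin 4 → Fin 4 → S4) (a : Fin 4 → S4),
    (∀ i, ρ i ∈ AR4 f) ∧
    VecHomog (ρ 0) d1 ∧ VecHomog (ρ 1) d2 ∧ VecHomog (ρ 2) d3 ∧ VecHomog (ρ 3) d3 ∧
    (∀ σ ∈ AR4 f, ∃ b : Fin 4 → S4, σ = ∑ i, b i • ρ i) ∧
    (a 0).IsHomogeneous (d3 - d1 + 1) ∧ (a 1).IsHomogeneous (d3 - d2 + 1) ∧
    (a 2).IsHomogeneous 1 ∧ (a 3).IsHomogeneous 1 ∧
    a ≠ 0 ∧ (∑ i, a i • ρ i) = 0 ∧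
    (∀ b : Fin 4 → S4, (∑ i, b i • ρ i) = 0 → ∃ c : S4, b = c • a)

/-- `D : f = 0` is tame: it is tame with respect to some pair `ρ1, ρ2` chosen as in the paper. -/
def IsTame (f : S4) : Prop :=
  ∃ (ρ1 ρ2 : Fin 4 → S4) (e1 e2 : ℕ), MinimalPair f ρ1 ρ2 e1 e2 ∧ TamePair f ρ1 ρ2

/-- The `4×4` matrix with rows the Euler vector field `(x,y,z,w)` and `ρ1, ρ2, ρ`. -/
def EMat (ρ1 ρ2 ρ : Fin 4 → S4) : Matrix (Fin 4) (Fin 4) S4 :=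
  Matrix.of ![fun i => X i, ρ1, ρ2, ρ]

/-- The upper bound for `m(f)_k` in Theorem 1.3 (2). -/
def milnorBound3 (d e1 e2 e3 : ℕ) (k : ℕ) : ℤ :=
  (binom3 ((k : ℤ) + 3) : ℤ) - 4 * binom3 ((k : ℤ) - d + 4) +
    ((binom3 ((k : ℤ) - d - e1 + 4) : ℤ) + (binom3 ((k : ℤ) - d - e2 + 4) : ℤ) +
      (binom3 ((k : ℤ) - d - e3 + 4) : ℤ))


/-! ### Generic linear algebra -/

lemma fr_split {V W : Type*} [AddCommGroup V] [Module ℂ V] [AddCommGroup W] [Module ℂ W]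
    (P : Submodule ℂ V) [FiniteDimensional ℂ P] (φ : V →ₗ[ℂ] W) :
    Module.finrank ℂ (P.map φ) + Module.finrank ℂ ↥(P ⊓ LinearMap.ker φ) =
      Module.finrank ℂ P := by
  have h := LinearMap.finrank_range_add_finrank_ker (φ.domRestrict P)
  have h1 : LinearMap.range (φ.domRestrict P) = P.map φ := by
    ext x; simp [Submodule.mem_map]
  have h2 : (LinearMap.ker (φ.domRestrict P)).map P.subtype = P ⊓ LinearMap.ker φ := by
    ext x
    simp [Submodule.mem_map, and_comm]
  rw [h1] at h
  rw [← h2, LinearEquiv.finrank_eq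
    (Submodule.equivMapOfInjective P.subtype P.subtype_injective _).symm]
  exact h

/-- The degree `k` part of `S`. -/
abbrev Hm (k : ℕ) : Submodule ℂ S4 := homogeneousSubmodule (Fin 4) ℂ k

instance Hm_fd (k : ℕ) : FiniteDimensional ℂ (Hm k) :=
  Module.Finite.iff_fg.mpr (homogeneousSubmodule_fg (Fin 4) ℂ k)

lemma finrank_Hm (k : ℕ) : Module.finrank ℂ (Hm k) = (k + 3).choose 3 := by
  have h : {d : Fin 4 →₀ ℕ | d.degree = k} =
      ((Finset.finsuppAntidiag (Finset.univ : Finset (Fin 4)) k : Finset (Fin 4 →₀ ℕ)) :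
        Set (Fin 4 →₀ ℕ)) := by
    ext d
    simp [Finset.mem_finsuppAntidiag, Finsupp.degree_eq_sum]
  have h3 := homogeneousSubmodule_eq_finsupp_supported (Fin 4) ℂ k
  unfold Hm
  rw [h3, LinearEquiv.finrank_eq (AddMonoidAlgebra.supportedEquivFinsupp _), h,
    Module.finrank_finsupp_self]
  simp [Finset.card_finsuppAntidiag_nat_eq_choose]
  rw [show k + 3 = 4 + k - 1 by omega]
  rw [← Nat.choose_symm (by omega)]
  congr 1 <;> omega

/-! ### Homogeneous components -/

lemma hc_mul {p : S4} {n : ℕ} (hp : p.IsHomogeneous n) (a : S4) (m : ℕ) :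
    homogeneousComponent (m + n) (a * p) = homogeneousComponent m a * p := by
  have key : ∀ (i : ℕ) (b : S4), b.IsHomogeneous i →
      homogeneousComponent (m + n) (b * p) = homogeneousComponent m b * p := by
    intro i b hb
    rw [homogeneousComponent_of_mem (n := i + n) ((mem_homogeneousSubmodule _ _).2 (hb.mul hp)),
      homogeneousComponent_of_mem (n := i) ((mem_homogeneousSubmodule _ _).2 hb)]
    by_cases h : m = i
    · simp [h]
    · simp [h]
  conv_lhs => rw [← sum_homogeneousComponent a]
  conv_rhs => rw [← sum_homogeneousComponent a]
  rw [Finset.sum_mul, map_sum, map_sum, Finset.sum_mul]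
  exact Finset.sum_congr rfl fun i _ => key i _ (homogeneousComponent_isHomogeneous i a)

/-- Componentwise homogeneous component. -/
def vhc (q : ℕ) (ρ : Fin 4 → S4) : Fin 4 → S4 := fun i => homogeneousComponent q (ρ i)

lemma vhc_homog (q : ℕ) (ρ : Fin 4 → S4) : VecHomog (vhc q ρ) q := fun i =>
  homogeneousComponent_isHomogeneous q (ρ i)

lemma vhc_self {q : ℕ} {ρ : Fin 4 → S4} (h : VecHomog ρ q) : vhc q ρ = ρ := by
  funext i
  exact homogeneousComponent_eq_self (h i)

lemma vhc_add (q : ℕ) (ρ σ : Fin 4 → S4) : vhc q (ρ + σ) = vhc q ρ + vhc q σ := by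
  funext i; simp [vhc]

lemma vhc_smul {q e : ℕ} (he : e ≤ q) {ρ : Fin 4 → S4} (h : VecHomog ρ e) (a : S4) :
    vhc q (a • ρ) = homogeneousComponent (q - e) a • ρ := by
  funext i
  have := hc_mul (h i) a (q - e)
  rw [Nat.sub_add_cancel he] at this
  simpa [vhc] using this

lemma vhc_mem {f : S4} {d : ℕ} (hf : f.IsHomogeneous d) {ρ : Fin 4 → S4} (h : ρ ∈ AR4 f)
    (q : ℕ) : vhc q ρ ∈ AR4 f := by
  have h0 : ∑ i, ρ i * pderiv i f = 0 := h
  change ∑ i, homogeneousComponent q (ρ i) * pderiv i f = 0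
  have : homogeneousComponent (q + (d - 1)) (∑ i, ρ i * pderiv i f) = 0 := by rw [h0]; simp
  rw [map_sum] at this
  rw [← this]
  exact Finset.sum_congr rfl fun i _ => (hc_mul hf.pderiv _ _).symm

lemma vhc_sum (ρ : Fin 4 → S4) : ∃ n : ℕ, ρ = ∑ q ∈ Finset.range n, vhc q ρ := by
  refine ⟨(Finset.univ.sup fun i => (ρ i).totalDegree) + 1, ?_⟩
  funext i
  rw [Finset.sum_apply]
  conv_lhs => rw [← sum_homogeneousComponent (ρ i)]
  refine Finset.sum_subset ?_ ?_
  · intro x hx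
    have := Finset.le_sup (f := fun i => (ρ i).totalDegree) (Finset.mem_univ i)
    simp only [Finset.mem_range] at hx ⊢
    omega
  · intro x _ hx
    simp only [Finset.mem_range, not_lt] at hx
    exact homogeneousComponent_eq_zero _ _ (by omega)

/-! ### Derivatives -/

lemma pderiv_zero_of_dvd {u : S4} {i : Fin 4} (h : u ∣ pderiv i u) : pderiv i u = 0 := by
  by_contra hne
  obtain ⟨w, hw⟩ := h
  have hu : u ≠ 0 := by rintro rfl; simp at hne
  have hw0 : w ≠ 0 := by rintro rfl; simp [hw] at hne
  have h1 : u.totalDegree ≤ (pderiv i u).totalDegree := by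
    rw [hw, totalDegree_mul_of_isDomain hu hw0]; omega
  obtain ⟨m, hm, hdeg⟩ := Finset.exists_mem_eq_sup (pderiv i u).support
    (by simpa [Finset.nonempty_iff_ne_empty] using hne) (fun s => s.degree)
  have hm' : m + Finsupp.single i 1 ∈ u.support := by
    rw [mem_support_iff] at hm ⊢
    rw [coeff_pderiv] at hm
    exact left_ne_zero_of_mul hm
  have h2 := le_totalDegree hm'
  have h3 : (pderiv i u).totalDegree = m.degree := hdeg
  change (m + Finsupp.single i 1).degree ≤ _ at h2
  rw [map_add, Finsupp.degree_single] at h2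
  omega

lemma isUnit_of_pderiv {u : S4} (hu : u ≠ 0) (h : ∀ i, pderiv i u = 0) : IsUnit u := by
  have hC : u = C (coeff 0 u) := by
    ext m
    rw [coeff_C]
    by_cases hm : 0 = m
    · simp [hm]
    · rw [if_neg hm]
      obtain ⟨i, hi⟩ : ∃ i, m i ≠ 0 := by
        by_contra hcon
        push Not at hcon
        exact hm (Finsupp.ext fun i => (hcon i).symm)
      have h1 := coeff_pderiv (i := i) u (m - Finsupp.single i 1)
      have h2 : m - Finsupp.single i 1 + Finsupp.single i 1 = m := by
        refine tsub_add_cancel_of_le ?_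
        rw [Finsupp.single_le_iff]; omega
      rw [h i, h2, coeff_zero] at h1
      rcases mul_eq_zero.1 h1.symm with h3 | h3
      · exact h3
      · exact absurd h3 (Nat.cast_add_one_ne_zero _)
  rw [hC]
  refine IsUnit.map C (isUnit_iff_ne_zero.2 ?_)
  intro h0
  rw [h0] at hC
  exact hu (by simpa using hC)

lemma dvd_of_dvd_mul_pderiv {f D : S4} (hred : Squarefree f)
    (h : ∀ i, f ∣ D * pderiv i f) : f ∣ D := by
  obtain ⟨u, v, c, huv, hcu, hcv⟩ :=
    UniqueFactorizationMonoid.exists_reduced_factors f hred.ne_zero D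
  have hf0 : f ≠ 0 := hred.ne_zero
  have hc0 : c ≠ 0 := by rintro rfl; simp at hcu; exact hf0 hcu.symm
  have hu0 : u ≠ 0 := by rintro rfl; simp at hcu; exact hf0 hcu.symm
  have hcop : IsRelPrime u c := by
    have := hred
    rw [← hcu] at this
    exact (squarefree_mul_iff.1 this).1.symm
  have hunit : IsUnit u := by
    refine isUnit_of_pderiv hu0 fun i => pderiv_zero_of_dvd ?_
    have h1 := h i
    nth_rewrite 1 [← hcu] at h1
    rw [← hcv, mul_assoc] at h1
    have h2 := (mul_dvd_mul_iff_left hc0).1 h1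
    have h3 := huv.dvd_of_dvd_mul_left h2
    rw [← hcu, pderiv_mul] at h3
    have h4 : u ∣ c * pderiv i u := (dvd_add_right (dvd_mul_left _ _)).1 h3
    exact hcop.dvd_of_dvd_mul_left h4
  rw [← hcu, ← hcv]
  exact mul_dvd_mul_left c (hunit.dvd)

/-! ### The determinant -/

/-- The determinant with rows Euler, `ρ1`, `ρ2`, `ρ` as a linear map in `ρ`. -/
def dmap (ρ1 ρ2 : Fin 4 → S4) : (Fin 4 → S4) →ₗ[S4] S4 where
  toFun ρ := (EMat ρ1 ρ2 ρ).det
  map_add' a b := by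
    have h : ∀ ρ, EMat ρ1 ρ2 ρ = (EMat ρ1 ρ2 0).updateRow 3 ρ := by
      intro ρ
      ext i j
      fin_cases i <;> simp [EMat, Matrix.updateRow_apply]
    rw [h (a + b), h a, h b, Matrix.det_updateRow_add]
  map_smul' c a := by
    have h : ∀ ρ, EMat ρ1 ρ2 ρ = (EMat ρ1 ρ2 0).updateRow 3 ρ := by
      intro ρ
      ext i j
      fin_cases i <;> simp [EMat, Matrix.updateRow_apply]
    rw [h (c • a), h a, Matrix.det_updateRow_smul]
    rfl

lemma dmap_apply (ρ1 ρ2 ρ : Fin 4 → S4) : dmap ρ1 ρ2 ρ = (EMat ρ1 ρ2 ρ).det := rfl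

lemma dmap_left (ρ1 ρ2 : Fin 4 → S4) : dmap ρ1 ρ2 ρ1 = 0 := by
  rw [dmap_apply]
  exact Matrix.det_zero_of_row_eq (i := (1 : Fin 4)) (j := 3) (by decide) rfl

lemma dmap_right (ρ1 ρ2 : Fin 4 → S4) : dmap ρ1 ρ2 ρ2 = 0 := by
  rw [dmap_apply]
  exact Matrix.det_zero_of_row_eq (i := (2 : Fin 4)) (j := 3) (by decide) rfl

lemma dmap_homog {ρ1 ρ2 ρ : Fin 4 → S4} {e1 e2 q : ℕ} (h1 : VecHomog ρ1 e1)
    (h2 : VecHomog ρ2 e2) (h : VecHomog ρ q) :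
    (dmap ρ1 ρ2 ρ).IsHomogeneous (1 + e1 + e2 + q) := by
  rw [dmap_apply, ← Matrix.det_transpose, Matrix.det_apply]
  refine IsHomogeneous.sum _ _ _ fun σ _ => ?_
  have hp : (∏ i, (EMat ρ1 ρ2 ρ)ᵀ (σ i) i).IsHomogeneous (∑ i : Fin 4, ![1, e1, e2, q] i) := by
    refine IsHomogeneous.prod _ _ _ fun i _ => ?_
    fin_cases i
    · exact isHomogeneous_X _ _
    · exact h1 _
    · exact h2 _
    · exact h _
  have hs : (∑ i : Fin 4, ![1, e1, e2, q] i) = 1 + e1 + e2 + q := by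
    simp [Fin.sum_univ_four]
  rw [hs] at hp
  rcases Int.units_eq_one_or (Equiv.Perm.sign σ) with hσ | hσ
  · rw [hσ, one_smul]; exact hp
  · rw [hσ, Units.neg_smul, one_smul]; exact hp.neg

section main

variable {f : S4} {d : ℕ} {ρ1 ρ2 : Fin 4 → S4}

lemma cramer (hf : f.IsHomogeneous d) (h1 : ρ1 ∈ AR4 f)
    (h2 : ρ2 ∈ AR4 f) {ρ : Fin 4 → S4} (h : ρ ∈ AR4 f) (i : Fin 4) :
    dmap ρ1 ρ2 ρ * pderiv i f = (EMat ρ1 ρ2 ρ).adjugate i 0 * ((d : S4) * f) := by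
  have hv : (EMat ρ1 ρ2 ρ) *ᵥ (fun i => pderiv i f) = Pi.single 0 ((d : S4) * f) := by
    funext j
    fin_cases j
    · have := hf.sum_X_mul_pderiv
      simp only [nsmul_eq_mul] at this
      simpa [EMat, Matrix.mulVec, dotProduct] using this
    · exact h1
    · exact h2
    · exact h
  have h3 := congrArg (fun v => ((EMat ρ1 ρ2 ρ).adjugate *ᵥ v) i) hv
  simp only [Matrix.mulVec_mulVec, Matrix.adjugate_mul, Matrix.smul_mulVec, Matrix.one_mulVec,
    Matrix.mulVec_single] at h3
  simpa [dmap_apply] using h3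

lemma natCast_ne (hd : 1 ≤ d) : (d : S4) ≠ 0 := by
  exact_mod_cast (by omega : d ≠ 0)

lemma f_dvd_dmap (hf : f.IsHomogeneous d) (hred : Squarefree f) (h1 : ρ1 ∈ AR4 f)
    (h2 : ρ2 ∈ AR4 f) {ρ : Fin 4 → S4} (h : ρ ∈ AR4 f) : f ∣ dmap ρ1 ρ2 ρ := by
  refine dvd_of_dvd_mul_pderiv hred fun i => ?_
  rw [cramer hf h1 h2 h i]
  exact (dvd_mul_left _ _).mul_left _

lemma minors_of_dmap (hd : 1 ≤ d) (hf : f.IsHomogeneous d) (hred : Squarefree f)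
    (h1 : ρ1 ∈ AR4 f) (h2 : ρ2 ∈ AR4 f) {ρ : Fin 4 → S4} (h : ρ ∈ AR4 f)
    (h0 : dmap ρ1 ρ2 ρ = 0) : MinorsVanish3 ρ1 ρ2 ρ := by
  intro j
  have h3 := cramer hf h1 h2 h j
  rw [h0, zero_mul] at h3
  have h4 : (EMat ρ1 ρ2 ρ).adjugate j 0 = 0 := by
    rcases mul_eq_zero.1 h3.symm with h5 | h5
    · exact h5
    · exact absurd h5 (mul_ne_zero (natCast_ne hd) hred.ne_zero)
  rw [Matrix.adjugate_fin_succ_eq_det_submatrix] at h4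
  have h5 : ((EMat ρ1 ρ2 ρ).submatrix (Fin.succAbove 0) (Fin.succAbove j)).det = 0 := by
    rcases mul_eq_zero.1 h4 with h5 | h5
    · exact absurd h5 (pow_ne_zero _ (by simp))
    · exact h5
  exact h5

lemma exists_pderiv_ne (hd : 1 ≤ d) (hf : f.IsHomogeneous d) (hred : Squarefree f) :
    ∃ i, pderiv i f ≠ 0 := by
  by_contra hcon
  push Not at hcon
  have := hf.sum_X_mul_pderiv
  simp only [hcon, mul_zero, Finset.sum_const_zero, nsmul_eq_mul] at this
  exact mul_ne_zero (natCast_ne hd) hred.ne_zero this.symm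

lemma koszul_mem (f : S4) (i j : Fin 4) :
    (Pi.single i (pderiv j f) - Pi.single j (pderiv i f) : Fin 4 → S4) ∈ AR4 f := by
  have : ∀ (i : Fin 4) (a : S4), jacPair f (Pi.single i a) = a * pderiv i f := by
    intro i a
    simp [jacPair, Pi.single_apply]
  rw [AR4, LinearMap.mem_ker, map_sub, this, this]
  ring

lemma indep (hd : 1 ≤ d) (hf : f.IsHomogeneous d) (hred : Squarefree f)
    (htame : TamePair f ρ1 ρ2) {a b : S4} (hab : a • ρ1 + b • ρ2 = 0) :
    a = 0 ∧ b = 0 := by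
  by_contra hne
  have hp : ∀ i j, ρ1 i * ρ2 j - ρ1 j * ρ2 i = 0 := by
    intro i j
    have hi : a * ρ1 i + b * ρ2 i = 0 := by simpa using congrFun hab i
    have hj : a * ρ1 j + b * ρ2 j = 0 := by simpa using congrFun hab j
    by_cases ha : a = 0
    · have hb : b ≠ 0 := fun hb => hne ⟨ha, hb⟩
      have : b * (ρ1 i * ρ2 j - ρ1 j * ρ2 i) = 0 := by
        linear_combination ρ1 i * hj - ρ1 j * hi
      exact (mul_eq_zero.1 this).resolve_left hb
    · have : a * (ρ1 i * ρ2 j - ρ1 j * ρ2 i) = 0 := by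
        linear_combination ρ2 j * hi - ρ2 i * hj
      exact (mul_eq_zero.1 this).resolve_left ha
  have hmv : ∀ ρ, MinorsVanish3 ρ1 ρ2 ρ := by
    intro ρ j
    rw [Matrix.det_fin_three]
    simp only [Matrix.of_apply, Matrix.cons_val]
    linear_combination ρ (j.succAbove 2) * hp (j.succAbove 0) (j.succAbove 1)
      - ρ (j.succAbove 1) * hp (j.succAbove 0) (j.succAbove 2)
      + ρ (j.succAbove 0) * hp (j.succAbove 1) (j.succAbove 2)
  obtain ⟨i, hi⟩ := exists_pderiv_ne hd hf hred
  have hgen : ∀ j, i ≠ j → ∃ a b : S4,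
      (Pi.single i (pderiv j f) - Pi.single j (pderiv i f) : Fin 4 → S4) = a • ρ1 + b • ρ2 := by
    intro j hij
    refine htame _ (koszul_mem f i j) (d - 1) ?_ (hmv _)
    intro l
    have hs : ∀ (i j : Fin 4), (Pi.single i (pderiv j f) : Fin 4 → S4) l ∈ Hm (d - 1) := by
      intro i j
      rw [Pi.single_apply]
      split_ifs
      · exact hf.pderiv
      · exact Submodule.zero_mem _
    exact Submodule.sub_mem _ (hs i j) (hs j i)
  obtain ⟨j, k, hij, hik, hjk⟩ : ∃ j k : Fin 4, i ≠ j ∧ i ≠ k ∧ j ≠ k := by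
    clear hi hgen
    revert i; decide
  obtain ⟨a1, b1, h1⟩ := hgen j hij
  obtain ⟨a2, b2, h2⟩ := hgen k hik
  have e1 := congrFun h1 j
  have e2 := congrFun h1 k
  have e3 := congrFun h2 j
  have e4 := congrFun h2 k
  simp only [Pi.sub_apply, Pi.add_apply, Pi.smul_apply, smul_eq_mul, Pi.single_eq_same,
    Pi.single_eq_of_ne hij.symm, Pi.single_eq_of_ne hik.symm, Pi.single_eq_of_ne hjk,
    Pi.single_eq_of_ne hjk.symm] at e1 e2 e3 e4
  have : pderiv i f * pderiv i f = 0 := by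
    linear_combination (a2 * ρ1 k + b2 * ρ2 k) * e1 - pderiv i f * e4
      - (a2 * ρ1 j + b2 * ρ2 j) * e2
      + (a1 * b2 - a2 * b1) * hp j k
  exact hi (mul_self_eq_zero.1 this)

end main

/-! ### Dimension counts -/

/-- Vectors of forms of degree `k`. -/
abbrev Hpi (k : ℕ) : Submodule ℂ (Fin 4 → S4) := Submodule.pi Set.univ (fun _ => Hm k)

/-- The inclusion of vectors of forms. -/
def hpiMap (k : ℕ) : (Fin 4 → Hm k) →ₗ[ℂ] (Fin 4 → S4) :=
  LinearMap.pi fun i => (Hm k).subtype ∘ₗ LinearMap.proj i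

lemma hpiMap_range (k : ℕ) : LinearMap.range (hpiMap k) = Hpi k := by
  ext v
  simp only [LinearMap.mem_range, Submodule.mem_pi]
  constructor
  · rintro ⟨w, rfl⟩ i _
    exact (w i).2
  · intro h
    exact ⟨fun i => ⟨v i, h i (Set.mem_univ i)⟩, rfl⟩

lemma hpiMap_inj (k : ℕ) : Function.Injective (hpiMap k) := by
  intro v w h
  funext i
  exact Subtype.ext (congrFun h i)

instance Hpi_fd (k : ℕ) : FiniteDimensional ℂ (Hpi k) := by
  rw [← hpiMap_range]; infer_instance

lemma finrank_Hpi (k : ℕ) : Module.finrank ℂ (Hpi k) = 4 * (k + 3).choose 3 := by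
  rw [← hpiMap_range, LinearMap.finrank_range_of_inj (hpiMap_inj k), Module.finrank_pi_fintype]
  simp [finrank_Hm]

lemma ARgr_le (f : S4) (k : ℕ) : ARgr f k ≤ Hpi k := inf_le_right

instance ARgr_fd (f : S4) (k : ℕ) : FiniteDimensional ℂ (ARgr f k) :=
  Submodule.finiteDimensional_of_le (ARgr_le f k)

lemma mem_ARgr {f : S4} {k : ℕ} {ρ : Fin 4 → S4} :
    ρ ∈ ARgr f k ↔ ρ ∈ AR4 f ∧ VecHomog ρ k := by
  simp [ARgr, VecHomog, Submodule.mem_pi]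

lemma milnor_eq {f : S4} {d : ℕ} (hf : f.IsHomogeneous d) (r : ℕ) :
    milnor4 f (r + (d - 1)) + 4 * (r + 3).choose 3 =
      (r + (d - 1) + 3).choose 3 + arDim f r := by
  have h1 := fr_split (Hm (r + (d - 1))) (Submodule.mkQ ((JacIdeal f).restrictScalars ℂ))
  have h2 := fr_split (Hpi r) ((jacPair f).restrictScalars ℂ)
  rw [finrank_Hm, Submodule.ker_mkQ] at h1
  rw [finrank_Hpi] at h2
  have h3 : Hpi r ⊓ LinearMap.ker ((jacPair f).restrictScalars ℂ) = ARgr f r := by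
    rw [ARgr, inf_comm]; rfl
  have h4 : (Hpi r).map ((jacPair f).restrictScalars ℂ) =
      Hm (r + (d - 1)) ⊓ (JacIdeal f).restrictScalars ℂ := by
    ext p
    simp only [Submodule.mem_map, Submodule.mem_inf, Submodule.restrictScalars_mem]
    constructor
    · rintro ⟨v, hv, rfl⟩
      rw [Submodule.mem_pi] at hv
      change ∑ i, v i * pderiv i f ∈ _ ∧ ∑ i, v i * pderiv i f ∈ _
      refine ⟨Submodule.sum_mem _ fun i _ => ?_, Ideal.sum_mem _ fun i _ => ?_⟩
      · exact IsHomogeneous.mul (hv i (Set.mem_univ i)) hf.pderiv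
      · exact Ideal.mul_mem_left _ _ (Ideal.subset_span ⟨i, rfl⟩)
    · rintro ⟨hp, hJ⟩
      obtain ⟨c, hc⟩ := Ideal.mem_span_range_iff_exists_fun.1 hJ
      refine ⟨vhc r c, ?_, ?_⟩
      · rw [Submodule.mem_pi]
        intro i _
        exact vhc_homog r c i
      · change ∑ i, homogeneousComponent r (c i) * pderiv i f = p
        have h5 := homogeneousComponent_eq_self hp
        rw [← hc, map_sum] at h5
        rw [← hc, ← h5]
        exact Finset.sum_congr rfl fun i _ => (hc_mul hf.pderiv _ _).symm
  rw [h3, h4] at h2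
  have h6 : milnor4 f (r + (d - 1)) = Module.finrank ℂ ((Hm (r + (d - 1))).map
    (Submodule.mkQ ((JacIdeal f).restrictScalars ℂ))) := rfl
  have h7 : arDim f r = Module.finrank ℂ (ARgr f r) := rfl
  omega

/-- Multiplication of a fixed vector by forms of degree `n`. -/
def sm (ρ : Fin 4 → S4) (n : ℕ) : Hm n →ₗ[ℂ] (Fin 4 → S4) :=
  (LinearMap.toSpanSingleton S4 (Fin 4 → S4) ρ).restrictScalars ℂ ∘ₗ (Hm n).subtype

lemma sm_apply (ρ : Fin 4 → S4) (n : ℕ) (a : Hm n) : sm ρ n a = (a : S4) • ρ := rfl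

lemma smul_homog {ρ : Fin 4 → S4} {e q : ℕ} (he : e ≤ q) (h : VecHomog ρ e)
    (a : Hm (q - e)) : VecHomog ((a : S4) • ρ) q := by
  intro i
  have := IsHomogeneous.mul a.2 (h i)
  rw [Nat.sub_add_cancel he] at this
  exact this

lemma smul_mem_ARgr {f : S4} {ρ : Fin 4 → S4} {e q : ℕ} (he : e ≤ q) (h : VecHomog ρ e)
    (hm : ρ ∈ AR4 f) (a : Hm (q - e)) : (a : S4) • ρ ∈ ARgr f q :=
  mem_ARgr.2 ⟨Submodule.smul_mem _ _ hm, smul_homog he h a⟩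

lemma arDim_of_free {f : S4} {d1 d2 d3 q : ℕ} (h : IsFreeWith f d1 d2 d3)
    (hq : d3 ≤ q) : arDim f q = (q - d1 + 3).choose 3 + (q - d2 + 3).choose 3 +
      (q - d3 + 3).choose 3 := by
  obtain ⟨h12, h23, ρ1, ρ2, ρ3, m1, m2, m3, v1, v2, v3, hgen, hind⟩ := h
  let Φ : (Hm (q - d1) × Hm (q - d2)) × Hm (q - d3) →ₗ[ℂ] (Fin 4 → S4) :=
    ((sm ρ1 (q - d1)).coprod (sm ρ2 (q - d2))).coprod (sm ρ3 (q - d3))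
  have hΦ : ∀ x, Φ x = (x.1.1 : S4) • ρ1 + (x.1.2 : S4) • ρ2 + (x.2 : S4) • ρ3 := by
    intro x
    simp [Φ, sm_apply]
  have hinj : Function.Injective Φ := by
    rw [← LinearMap.ker_eq_bot, LinearMap.ker_eq_bot']
    intro x hx
    rw [hΦ] at hx
    obtain ⟨ha, hb, hc⟩ := hind _ _ _ hx
    exact Prod.ext (Prod.ext (Subtype.ext ha) (Subtype.ext hb)) (Subtype.ext hc)
  have hrange : LinearMap.range Φ = ARgr f q := by
    apply le_antisymm
    · rintro _ ⟨x, rfl⟩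
      rw [hΦ]
      exact Submodule.add_mem _ (Submodule.add_mem _
        (smul_mem_ARgr (by omega) v1 m1 _) (smul_mem_ARgr (by omega) v2 m2 _))
        (smul_mem_ARgr (by omega) v3 m3 _)
    · intro ρ hρ
      obtain ⟨hm, hv⟩ := mem_ARgr.1 hρ
      obtain ⟨a, b, c, habc⟩ := hgen ρ hm
      refine ⟨((⟨_, homogeneousComponent_mem _ a⟩, ⟨_, homogeneousComponent_mem _ b⟩),
        ⟨_, homogeneousComponent_mem _ c⟩), ?_⟩
      rw [hΦ]
      have h1 := vhc_self hv
      rw [← h1, habc, vhc_add, vhc_add, vhc_smul (by omega) v1, vhc_smul (by omega) v2,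
        vhc_smul (by omega) v3]
  rw [arDim, ← hrange, LinearMap.finrank_range_of_inj hinj, Module.finrank_prod,
    Module.finrank_prod, finrank_Hm, finrank_Hm, finrank_Hm]

section main2

variable {f : S4} {d e1 e2 e3 : ℕ} {ρ1 ρ2 : Fin 4 → S4}

/-- Multiplication by `f` on forms of degree `n`. -/
def fmul (f : S4) (n : ℕ) : Hm n →ₗ[ℂ] S4 :=
  (LinearMap.mulLeft ℂ f) ∘ₗ (Hm n).subtype

lemma fmul_apply (f : S4) (n : ℕ) (a : Hm n) : fmul f n a = f * (a : S4) := rfl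

lemma finrank_fmul (hf0 : f ≠ 0) (n : ℕ) :
    Module.finrank ℂ (LinearMap.range (fmul f n)) = (n + 3).choose 3 := by
  rw [LinearMap.finrank_range_of_inj, finrank_Hm]
  intro a b hab
  exact Subtype.ext (mul_left_cancel₀ hf0 hab)

lemma map_dmap_le (hf : f.IsHomogeneous d) (hred : Squarefree f)
    (h1 : ρ1 ∈ AR4 f) (h2 : ρ2 ∈ AR4 f) (v1 : VecHomog ρ1 e1) (v2 : VecHomog ρ2 e2)
    (he3 : e1 + e2 + e3 + 1 = d) {q : ℕ} (hq : e3 ≤ q) :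
    (ARgr f q).map ((dmap ρ1 ρ2).restrictScalars ℂ) ≤ LinearMap.range (fmul f (q - e3)) := by
  rintro _ ⟨ρ, hρ, rfl⟩
  obtain ⟨hm, hv⟩ := mem_ARgr.1 hρ
  obtain ⟨h, hh⟩ := f_dvd_dmap hf hred h1 h2 hm
  refine ⟨⟨_, homogeneousComponent_mem _ h⟩, ?_⟩
  have hhom := dmap_homog v1 v2 hv
  rw [show 1 + e1 + e2 + q = (q - e3) + d by omega] at hhom
  have h5 := homogeneousComponent_eq_self hhom
  rw [hh, mul_comm, hc_mul hf] at h5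
  rw [fmul_apply, mul_comm]
  change _ = dmap ρ1 ρ2 ρ
  rw [hh, h5, mul_comm]

lemma finrank_ker (hd : 1 ≤ d) (hf : f.IsHomogeneous d) (hred : Squarefree f)
    (h1 : ρ1 ∈ AR4 f) (h2 : ρ2 ∈ AR4 f) (v1 : VecHomog ρ1 e1) (v2 : VecHomog ρ2 e2)
    (htame : TamePair f ρ1 ρ2) {q : ℕ} (hq1 : e1 ≤ q) (hq2 : e2 ≤ q) :
    Module.finrank ℂ ↥(ARgr f q ⊓ LinearMap.ker ((dmap ρ1 ρ2).restrictScalars ℂ)) =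
      (q - e1 + 3).choose 3 + (q - e2 + 3).choose 3 := by
  let Φ : Hm (q - e1) × Hm (q - e2) →ₗ[ℂ] (Fin 4 → S4) :=
    (sm ρ1 (q - e1)).coprod (sm ρ2 (q - e2))
  have hΦ : ∀ x, Φ x = (x.1 : S4) • ρ1 + (x.2 : S4) • ρ2 := by
    intro x
    simp [Φ, sm_apply]
  have hinj : Function.Injective Φ := by
    rw [← LinearMap.ker_eq_bot, LinearMap.ker_eq_bot']
    intro x hx
    rw [hΦ] at hx
    obtain ⟨ha, hb⟩ := indep hd hf hred htame hx
    exact Prod.ext (Subtype.ext ha) (Subtype.ext hb)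
  have hrange : LinearMap.range Φ =
      ARgr f q ⊓ LinearMap.ker ((dmap ρ1 ρ2).restrictScalars ℂ) := by
    apply le_antisymm
    · rintro _ ⟨x, rfl⟩
      rw [hΦ]
      refine ⟨Submodule.add_mem _
        (smul_mem_ARgr hq1 v1 h1 _) (smul_mem_ARgr hq2 v2 h2 _), ?_⟩
      change dmap ρ1 ρ2 _ = 0
      rw [map_add, map_smul, map_smul, dmap_left, dmap_right]
      simp
    · rintro ρ ⟨hρ, hker⟩
      obtain ⟨hm, hv⟩ := mem_ARgr.1 hρ
      obtain ⟨a, b, hab⟩ := htame ρ hm q hv (minors_of_dmap hd hf hred h1 h2 hm hker)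
      refine ⟨(⟨_, homogeneousComponent_mem _ a⟩, ⟨_, homogeneousComponent_mem _ b⟩), ?_⟩
      rw [hΦ]
      rw [← vhc_self hv, hab, vhc_add, vhc_smul hq1 v1, vhc_smul hq2 v2]
  rw [← hrange, LinearMap.finrank_range_of_inj hinj, Module.finrank_prod,
    finrank_Hm, finrank_Hm]

lemma arDim_le (hd : 1 ≤ d) (hf : f.IsHomogeneous d) (hred : Squarefree f)
    (h1 : ρ1 ∈ AR4 f) (h2 : ρ2 ∈ AR4 f) (v1 : VecHomog ρ1 e1) (v2 : VecHomog ρ2 e2)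
    (htame : TamePair f ρ1 ρ2) (he3 : e1 + e2 + e3 + 1 = d) {q : ℕ} (hq1 : e1 ≤ q)
    (hq2 : e2 ≤ q) (hq : e3 ≤ q) :
    arDim f q ≤ (q - e1 + 3).choose 3 + (q - e2 + 3).choose 3 + (q - e3 + 3).choose 3 := by
  have h := fr_split (ARgr f q) ((dmap ρ1 ρ2).restrictScalars ℂ)
  rw [finrank_ker hd hf hred h1 h2 v1 v2 htame hq1 hq2] at h
  have hle := Submodule.finrank_mono (map_dmap_le hf hred h1 h2 v1 v2 he3 hq)
  rw [finrank_fmul hred.ne_zero] at hle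
  rw [arDim]
  omega

lemma free_of_eq (hd : 1 ≤ d) (hf : f.IsHomogeneous d) (hred : Squarefree f)
    (h1 : ρ1 ∈ AR4 f) (h2 : ρ2 ∈ AR4 f) (v1 : VecHomog ρ1 e1) (v2 : VecHomog ρ2 e2)
    (htame : TamePair f ρ1 ρ2) (he3 : e1 + e2 + e3 + 1 = d) (h12 : e1 ≤ e2) (h23 : e2 ≤ e3)
    (heq : arDim f e3 =
      (e3 - e1 + 3).choose 3 + (e3 - e2 + 3).choose 3 + (e3 - e3 + 3).choose 3) :
    IsFreeWith f e1 e2 e3 := by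
  have h := fr_split (ARgr f e3) ((dmap ρ1 ρ2).restrictScalars ℂ)
  rw [finrank_ker hd hf hred h1 h2 v1 v2 htame (h12.trans h23) h23] at h
  have hle := map_dmap_le hf hred h1 h2 v1 v2 he3 (le_refl e3)
  have hEq : (ARgr f e3).map ((dmap ρ1 ρ2).restrictScalars ℂ) =
      LinearMap.range (fmul f (e3 - e3)) := by
    refine Submodule.eq_of_le_of_finrank_eq hle ?_
    rw [finrank_fmul hred.ne_zero]
    rw [arDim] at heq
    omega
  have hfm : f ∈ (ARgr f e3).map ((dmap ρ1 ρ2).restrictScalars ℂ) := by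
    rw [hEq]
    refine ⟨⟨1, ?_⟩, by simp [fmul_apply]⟩
    rw [Nat.sub_self]
    exact isHomogeneous_one _ _
  obtain ⟨ρ3, hρ3, hdet⟩ := hfm
  obtain ⟨m3, v3⟩ := mem_ARgr.1 hρ3
  replace hdet : dmap ρ1 ρ2 ρ3 = f := hdet
  -- generation by homogeneous elements
  have hgen : ∀ q, ∀ ρ ∈ AR4 f, VecHomog ρ q →
      ρ ∈ Submodule.span S4 {ρ1, ρ2, ρ3} := by
    intro q ρ hm hv
    have i1 : ρ1 ∈ Submodule.span S4 {ρ1, ρ2, ρ3} := Submodule.subset_span (by simp)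
    have i2 : ρ2 ∈ Submodule.span S4 {ρ1, ρ2, ρ3} := Submodule.subset_span (by simp)
    have i3 : ρ3 ∈ Submodule.span S4 {ρ1, ρ2, ρ3} := Submodule.subset_span (by simp)
    have key : ∀ σ ∈ AR4 f, VecHomog σ q → dmap ρ1 ρ2 σ = 0 →
        σ ∈ Submodule.span S4 {ρ1, ρ2, ρ3} := by
      intro σ hσ hσv h0
      obtain ⟨a, b, hab⟩ := htame σ hσ q hσv (minors_of_dmap hd hf hred h1 h2 hσ h0)
      rw [hab]
      exact Submodule.add_mem _ (Submodule.smul_mem _ _ i1) (Submodule.smul_mem _ _ i2)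
    by_cases hq : e3 ≤ q
    · obtain ⟨c, hc⟩ := map_dmap_le hf hred h1 h2 v1 v2 he3 hq
        (Submodule.mem_map_of_mem (mem_ARgr.2 ⟨hm, hv⟩))
      replace hc : f * (c : S4) = dmap ρ1 ρ2 ρ := hc
      have hmem : (ρ - (c : S4) • ρ3) ∈ ARgr f q :=
        Submodule.sub_mem _ (mem_ARgr.2 ⟨hm, hv⟩) (smul_mem_ARgr hq v3 m3 c)
      obtain ⟨g1, g2⟩ := mem_ARgr.1 hmem
      have := key _ g1 g2 (by rw [map_sub, map_smul, hdet, ← hc, smul_eq_mul]; ring)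
      have h5 := Submodule.add_mem _ this (Submodule.smul_mem _ (c : S4) i3)
      rwa [sub_add_cancel] at h5
    · refine key ρ hm hv ?_
      obtain ⟨g, hg⟩ := f_dvd_dmap hf hred h1 h2 hm
      by_contra hne
      have hg0 : g ≠ 0 := by rintro rfl; simp [hg] at hne
      have t1 := (dmap_homog v1 v2 hv).totalDegree hne
      rw [hg, totalDegree_mul_of_isDomain hred.ne_zero hg0, hf.totalDegree hred.ne_zero] at t1
      omega
  refine ⟨h12, h23, ρ1, ρ2, ρ3, h1, h2, m3, v1, v2, v3, ?_, ?_⟩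
  · intro ρ hρ
    have : ρ ∈ Submodule.span S4 {ρ1, ρ2, ρ3} := by
      obtain ⟨n, hn⟩ := vhc_sum ρ
      rw [hn]
      exact Submodule.sum_mem _ fun q _ => hgen q _ (vhc_mem hf hρ q) (vhc_homog q ρ)
    obtain ⟨a, b, c, habc⟩ := Submodule.mem_span_triple.1 this
    exact ⟨a, b, c, habc.symm⟩
  · intro a b c habc
    have h5 := congrArg (dmap ρ1 ρ2) habc
    rw [map_add, map_add, map_smul, map_smul, map_smul, dmap_left, dmap_right, hdet] at h5
    simp only [smul_eq_mul, mul_zero, zero_add, map_zero] at h5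
    have hc := (mul_eq_zero.1 h5).resolve_right hred.ne_zero
    rw [hc, zero_smul, add_zero] at habc
    obtain ⟨ha, hb⟩ := indep hd hf hred htame habc
    exact ⟨ha, hb, hc⟩

lemma bound_eq (hd : 1 ≤ d) {r : ℕ} (hf : f.IsHomogeneous d) (q1 : e1 ≤ r) (q2 : e2 ≤ r)
    (q3 : e3 ≤ r) :
    milnorBound3 d e1 e2 e3 (r + (d - 1)) - (milnor4 f (r + (d - 1)) : ℤ) =
      (((r - e1 + 3).choose 3 + (r - e2 + 3).choose 3 + (r - e3 + 3).choose 3 : ℕ) : ℤ) - (arDim f r : ℤ) := by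
  have h := milnor_eq hf r
  unfold milnorBound3 binom3
  rw [show (((r + (d - 1) : ℕ) : ℤ) + 3).toNat = r + (d - 1) + 3 by omega,
    show (((r + (d - 1) : ℕ) : ℤ) - d + 4).toNat = r + 3 by omega,
    show (((r + (d - 1) : ℕ) : ℤ) - d - e1 + 4).toNat = r - e1 + 3 by omega,
    show (((r + (d - 1) : ℕ) : ℤ) - d - e2 + 4).toNat = r - e2 + 3 by omega,
    show (((r + (d - 1) : ℕ) : ℤ) - d - e3 + 4).toNat = r - e3 + 3 by omega]
  push_cast
  zify at h
  linarith

end main2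

/-- **Theorem 1.3 (2).** For a tame surface and `k ≥ e3 + d - 1`, `m(f)_k` is bounded above
by the stated binomial expression; equality for all such `k` is equivalent to equality at
`k = e3 + d - 1`, and both are equivalent to `D` being free with exponents `e1, e2, e3`. -/
theorem thm_1_3_part2 (f : S4) (d e1 e2 e3 : ℕ) (ρ1 ρ2 : Fin 4 → S4)
    (hd : 1 ≤ d) (hf : f.IsHomogeneous d) (hred : Squarefree f)
    (hmin : MinimalPair f ρ1 ρ2 e1 e2) (htame : TamePair f ρ1 ρ2)
    (he3 : e1 + e2 + e3 + 1 = d) (he23 : e2 ≤ e3) :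
    (∀ k : ℕ, e3 + d - 1 ≤ k → (milnor4 f k : ℤ) ≤ milnorBound3 d e1 e2 e3 k) ∧
    ((∀ k : ℕ, e3 + d - 1 ≤ k → (milnor4 f k : ℤ) = milnorBound3 d e1 e2 e3 k) ↔
      (milnor4 f (e3 + d - 1) : ℤ) = milnorBound3 d e1 e2 e3 (e3 + d - 1)) ∧
    ((milnor4 f (e3 + d - 1) : ℤ) = milnorBound3 d e1 e2 e3 (e3 + d - 1) ↔
      IsFreeWith f e1 e2 e3) := by
  obtain ⟨h1, -, v1, -, h2, v2, h12, -, -⟩ := hmin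
  have hle : ∀ k : ℕ, e3 + d - 1 ≤ k → (milnor4 f k : ℤ) ≤ milnorBound3 d e1 e2 e3 k := by
    intro k hk
    obtain ⟨r, rfl⟩ : ∃ r, k = r + (d - 1) := ⟨k - (d - 1), by omega⟩
    have hb := bound_eq (f := f) (e1 := e1) (e2 := e2) (e3 := e3) (r := r) hd hf
      (by omega) (by omega) (by omega)
    have ha := arDim_le (q := r) hd hf hred h1 h2 v1 v2 htame he3
      (by omega) (by omega) (by omega)
    zify at ha
    push_cast at hb
    linarith
  have hii : (milnor4 f (e3 + d - 1) : ℤ) = milnorBound3 d e1 e2 e3 (e3 + d - 1) →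
      IsFreeWith f e1 e2 e3 := by
    intro h
    refine free_of_eq hd hf hred h1 h2 v1 v2 htame he3 h12 he23 ?_
    have hb := bound_eq (f := f) (e1 := e1) (e2 := e2) (e3 := e3) (r := e3) hd hf
      (by omega) (by omega) (by omega)
    rw [show e3 + (d - 1) = e3 + d - 1 by omega, h, sub_self] at hb
    have : ((arDim f e3 : ℕ) : ℤ) = _ := (sub_eq_zero.1 hb.symm).symm
    exact_mod_cast this
  have hiii : IsFreeWith f e1 e2 e3 → ∀ k : ℕ, e3 + d - 1 ≤ k →
      (milnor4 f k : ℤ) = milnorBound3 d e1 e2 e3 k := by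
    intro h k hk
    obtain ⟨r, rfl⟩ : ∃ r, k = r + (d - 1) := ⟨k - (d - 1), by omega⟩
    have hb := bound_eq (f := f) (e1 := e1) (e2 := e2) (e3 := e3) (r := r) hd hf
      (by omega) (by omega) (by omega)
    rw [arDim_of_free h (q := r) (by omega), sub_self] at hb
    exact (sub_eq_zero.1 hb).symm
  exact ⟨hle, ⟨fun h => h _ le_rfl, fun h => hiii (hii h)⟩,
    ⟨hii, fun h => hiii h _ le_rfl⟩⟩
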